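/- If a word w' over Γ is obtained from a word w over Γ by a one-step reduction, then for every state (p, d) ∈ ℂ × ℂ the set of positions visited by the turtle run of w' from (p, d) (including the starting position p and the position after each letter) is a subset of the set of positions visited by the turtle run of w from (p, d). That is, reduction only removes backtracking edges and never creates new vertices of the path. -/

import Mathlib

/-!
The letter `v` is a half turn, so in a factor `X v Y` the second step retraces the first: after
`X v` the turtle is back at its starting position with direction `-ρ(X) d`. The table `Red` is
exactly multiplication of turn factors, `ρ(Red X Y) = ρ(Y) ρ(v) ρ(X)` (`rho_red`), so the single
step `Red X Y` reaches the same state as `X v Y` (`turtleStep_red`). The runs therefore agree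
before and after the replaced factor, and the run of `w` differs
only by also visiting `p + ρ(X) d` and revisiting `p`, where `(p, d)` is the state at the factor.
-/

open Complex

/-- The boundary alphabet Γ = {L, R, s, v}. -/
inductive GammaLetter : Type
  | L | R | s | v
deriving DecidableEq

/-- The turn factor: ρ(L) = i, ρ(R) = -i, ρ(s) = 1, ρ(v) = -1. -/
noncomputable def rho : GammaLetter → ℂ
  | .L => I
  | .R => -I
  | .s => 1
  | .v => -1

/-- One turtle step: the letter x updates (p, d) by first d ↦ ρ(x)·d and then p ↦ p + d. -/
noncomputable def turtleStep (x : GammaLetter) (st : ℂ × ℂ) : ℂ × ℂ :=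
  (st.1 + rho x * st.2, rho x * st.2)

/-- The turtle run of a word from a state, processing letters left to right. -/
noncomputable def run (w : List GammaLetter) (st : ℂ × ℂ) : ℂ × ℂ :=
  w.foldl (fun st x => turtleStep x st) st

/-- The reduction table: RvR ↦ s, LvL ↦ s, RvL ↦ v, LvR ↦ v, svR ↦ L, svL ↦ R,
Rvs ↦ L, Lvs ↦ R, svs ↦ v.  (`Red X Y` is the value on the triple X v Y.) -/
def Red : GammaLetter → GammaLetter → GammaLetter
  | .R, .R => .s
  | .L, .L => .s
  | .R, .L => .v
  | .L, .R => .v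
  | .s, .R => .L
  | .s, .L => .R
  | .R, .s => .L
  | .L, .s => .R
  | .s, .s => .v
  | _, _ => .v

/-- One-step reduction: replace a factor X v Y (X, Y ∈ {L, R, s}) by Red(XvY). -/
def StepRed (w w' : List GammaLetter) : Prop :=
  ∃ (u t : List GammaLetter) (X Y : GammaLetter),
    (X = GammaLetter.L ∨ X = GammaLetter.R ∨ X = GammaLetter.s) ∧
    (Y = GammaLetter.L ∨ Y = GammaLetter.R ∨ Y = GammaLetter.s) ∧
    w = u ++ [X, GammaLetter.v, Y] ++ t ∧
    w' = u ++ [Red X Y] ++ t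

/-- The positions visited by the turtle run of a word from a state: the starting
position together with the position after each processed letter. -/
noncomputable def positionsVisited : List GammaLetter → ℂ × ℂ → List ℂ
  | [], st => [st.1]
  | x :: rest, st => st.1 :: positionsVisited rest (turtleStep x st)

theorem rho_red {X Y : GammaLetter}
    (hX : X = GammaLetter.L ∨ X = GammaLetter.R ∨ X = GammaLetter.s)
    (hY : Y = GammaLetter.L ∨ Y = GammaLetter.R ∨ Y = GammaLetter.s) :
    rho (Red X Y) = rho Y * rho GammaLetter.v * rho X := by
  rcases hX with rfl | rfl | rfl <;> rcases hY with rfl | rfl | rfl <;> simp [rho, Red]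

theorem turtleStep_red {X Y : GammaLetter}
    (hX : X = GammaLetter.L ∨ X = GammaLetter.R ∨ X = GammaLetter.s)
    (hY : Y = GammaLetter.L ∨ Y = GammaLetter.R ∨ Y = GammaLetter.s) (st : ℂ × ℂ) :
    turtleStep (Red X Y) st = turtleStep Y (turtleStep GammaLetter.v (turtleStep X st)) := by
  simp only [turtleStep, rho_red hX hY, Prod.mk.injEq]
  constructor <;> simp only [rho] <;> ring

/-- Prepending a common prefix preserves inclusion of visited positions. -/
theorem positionsVisited_append_subset {a b : List GammaLetter}
    (hab : ∀ st, positionsVisited a st ⊆ positionsVisited b st) (u : List GammaLetter) :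
    ∀ st, positionsVisited (u ++ a) st ⊆ positionsVisited (u ++ b) st := by
  induction u with
  | nil => exact hab
  | cons x u ih => exact fun st => List.cons_subset_cons _ (ih (turtleStep x st))

/-- If w' is obtained from w by a one-step reduction then, from any state, every
position visited by the turtle run of w' is visited by the turtle run of w. -/
theorem stepRed_positions_subset (w w' : List GammaLetter) (h : StepRed w w')
    (p d : ℂ) :
    ∀ q ∈ positionsVisited w' (p, d), q ∈ positionsVisited w (p, d) := by
  obtain ⟨u, t, X, Y, hX, hY, rfl, rfl⟩ := h
  intro q hq
  rw [List.append_assoc] at hq ⊢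
  refine positionsVisited_append_subset (fun st => ?_) u (p, d) hq
  simp only [List.cons_append, List.nil_append, positionsVisited, turtleStep_red hX hY]
  exact List.cons_subset_cons _
    (fun _ h => List.mem_cons_of_mem _ (List.mem_cons_of_mem _ h))
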